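/- Let B, Q, R be real n×n matrices with Q and R symmetric positive semidefinite, and let q be the complex-valued quadratic form on ℝ^{2n} defined by q(x,ξ) = (1/2)⟨Qξ,ξ⟩ + (1/2)⟨Rx,x⟩ − i⟨Bx,ξ⟩ for (x,ξ) ∈ ℝⁿ×ℝⁿ. Then the Hamilton map of q is F = (1/2)·[[−iB, Q],[−R, iBᵀ]] (in n×n blocks), and the singular space of q equals S = [⋂_{j=0}^{2n−1} Ker(R B^j)] × [⋂_{j=0}^{2n−1} Ker(Q (Bᵀ)^j)] ⊂ ℝⁿ×ℝⁿ. -/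

import Mathlib

noncomputable section

open Matrix

/-- The standard symplectic matrix `J = [[0, I], [-I, 0]]` on `ℝ^{2n}` (complexified). -/
def Jmat (n : ℕ) : Matrix (Fin n ⊕ Fin n) (Fin n ⊕ Fin n) ℂ :=
  Matrix.fromBlocks 0 1 (-1) 0

/-- The real part `Re F` of a complex matrix, viewed as a complex matrix. -/
def matRe {ι : Type*} (F : Matrix ι ι ℂ) : Matrix ι ι ℂ := F.map fun z => ((z.re : ℝ) : ℂ)

/-- The imaginary part `Im F` of a complex matrix, viewed as a complex matrix. -/
def matIm {ι : Type*} (F : Matrix ι ι ℂ) : Matrix ι ι ℂ := F.map fun z => ((z.im : ℝ) : ℂ)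

/-- The canonical embedding of a real vector into `ℂ^ι`. -/
def cvec {ι : Type*} (X : ι → ℝ) : ι → ℂ := fun i => (X i : ℂ)

/-- The complexification of a real matrix. -/
def cmat {ι κ : Type*} (M : Matrix ι κ ℝ) : Matrix ι κ ℂ := M.map fun r => (r : ℂ)

end

open Matrix

theorem symm_zero_aux {ι : Type*} [Fintype ι] [DecidableEq ι] (D : Matrix ι ι ℂ)
    (hs : D.IsSymm) (h : ∀ X : ι → ℂ, X ⬝ᵥ D.mulVec X = 0) : D = 0 := by
  have hd : ∀ i, D i i = 0 := fun i => by
    have := h (Pi.single i 1)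
    simpa using this
  ext i j
  have h1 := h (Pi.single i 1 + Pi.single j 1)
  have h2 : D j i = D i j := hs.apply i j
  simp [Matrix.mulVec_add, add_dotProduct, dotProduct_add, hd, h2] at h1
  simpa using h1

theorem cmat_mulVec_aux {ι κ : Type*} [Fintype κ] (M : Matrix ι κ ℝ) (x : κ → ℝ) :
    (cmat M).mulVec (cvec x) = cvec (M.mulVec x) := by
  ext i
  simp [cmat, cvec, Matrix.mulVec, dotProduct]

theorem cvec_eq_zero_aux {ι : Type*} (x : ι → ℝ) : cvec x = 0 ↔ x = 0 := by
  simp [cvec, funext_iff]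

theorem fromBlocks_pow_aux {n : ℕ} (A D : Matrix (Fin n) (Fin n) ℝ) (j : ℕ) :
    (Matrix.fromBlocks A 0 0 D) ^ j = Matrix.fromBlocks (A ^ j) 0 0 (D ^ j) := by
  induction j with
  | zero => simp
  | succ k ih => simp [pow_succ, ih, Matrix.fromBlocks_multiply]

theorem cmat_mul_aux {ι : Type*} [Fintype ι] (M N : Matrix ι ι ℝ) :
    cmat (M * N) = cmat M * cmat N :=
  Matrix.map_mul (f := Complex.ofRealHom)

theorem cmat_pow_aux {ι : Type*} [Fintype ι] [DecidableEq ι] (M : Matrix ι ι ℝ) (j : ℕ) :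
    cmat (M ^ j) = cmat M ^ j :=
  Matrix.map_pow M Complex.ofRealHom j

/-- Let `B, Q, R` be real `n×n` matrices with `Q` and `R` symmetric positive
semidefinite, and let `q(x,ξ) = (1/2)⟨Qξ,ξ⟩ + (1/2)⟨Rx,x⟩ - i⟨Bx,ξ⟩` be the quadratic symbol
of the associated generalized Ornstein–Uhlenbeck operator, with symmetric matrix `Q̃` and
Hamilton map `F = JQ̃`. Then `F = (1/2)[[-iB, Q], [-R, iBᵀ]]` and the singular space of `q`
equals `[⋂_{j=0}^{2n-1} Ker(R B^j)] × [⋂_{j=0}^{2n-1} Ker(Q (Bᵀ)^j)]`. -/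
theorem statement_19 (n : ℕ) (hn : 0 < n) (B Q R : Matrix (Fin n) (Fin n) ℝ)
    (hQ : Q.PosSemidef) (hR : R.PosSemidef)
    (Qtilde : Matrix (Fin n ⊕ Fin n) (Fin n ⊕ Fin n) ℂ) (hQtsymm : Qtilde.IsSymm)
    (hq : ∀ X : Fin n ⊕ Fin n → ℂ,
      ∑ i, X i * Qtilde.mulVec X i
        = (1 / 2 : ℂ) * (∑ i, (cmat Q).mulVec (fun j => X (Sum.inr j)) i * X (Sum.inr i))
          + (1 / 2 : ℂ) * (∑ i, (cmat R).mulVec (fun j => X (Sum.inl j)) i * X (Sum.inl i))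
          - Complex.I * ∑ i, (cmat B).mulVec (fun j => X (Sum.inl j)) i * X (Sum.inr i))
    (F : Matrix (Fin n ⊕ Fin n) (Fin n ⊕ Fin n) ℂ) (hF : F = Jmat n * Qtilde) :
    F = (1 / 2 : ℂ) • Matrix.fromBlocks (-(Complex.I • cmat B)) (cmat Q)
          (-(cmat R)) (Complex.I • cmat B.transpose)
      ∧ ∀ X : Fin n ⊕ Fin n → ℝ,
          (∀ j < 2 * n, (matRe F * matIm F ^ j).mulVec (cvec X) = 0)
            ↔ ((∀ j < 2 * n, (R * B ^ j).mulVec (fun i => X (Sum.inl i)) = 0)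
                ∧ ∀ j < 2 * n, (Q * B.transpose ^ j).mulVec (fun i => X (Sum.inr i)) = 0) := by
  have hFe : F = (1 / 2 : ℂ) • Matrix.fromBlocks (-(Complex.I • cmat B)) (cmat Q)
          (-(cmat R)) (Complex.I • cmat B.transpose) := by
    have hQs : (cmat Q)ᵀ = cmat Q := by
      have h : Qᵀ = Q := by simpa using hQ.isHermitian.eq
      conv_rhs => rw [← h]
      rfl
    have hRs : (cmat R)ᵀ = cmat R := by
      have h : Rᵀ = R := by simpa using hR.isHermitian.eq
      conv_rhs => rw [← h]
      rfl
    have hBt : cmat Bᵀ = (cmat B)ᵀ := rfl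
    have key : Qtilde - (1 / 2 : ℂ) • Matrix.fromBlocks (cmat R) (-(Complex.I • cmat Bᵀ))
        (-(Complex.I • cmat B)) (cmat Q) = 0 := by
      apply symm_zero_aux
      · rw [Matrix.IsSymm, Matrix.transpose_sub, hQtsymm.eq, Matrix.transpose_smul,
          Matrix.fromBlocks_transpose, hQs, hRs, hBt]
        simp
      · intro X
        have h := hq X
        obtain ⟨x, y, rfl⟩ : ∃ x y : Fin n → ℂ, X = Sum.elim x y :=
          ⟨X ∘ Sum.inl, X ∘ Sum.inr, by simp⟩
        change Sum.elim x y ⬝ᵥ Qtilde.mulVec (Sum.elim x y) =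
          (1 / 2 : ℂ) * ((cmat Q).mulVec y ⬝ᵥ y) + (1 / 2 : ℂ) * ((cmat R).mulVec x ⬝ᵥ x)
            - Complex.I * ((cmat B).mulVec x ⬝ᵥ y) at h
        have e1 : x ⬝ᵥ (cmat B)ᵀ.mulVec y = (cmat B).mulVec x ⬝ᵥ y := by
          rw [Matrix.dotProduct_mulVec, Matrix.vecMul_transpose]
        rw [Matrix.sub_mulVec, dotProduct_sub, h, Matrix.smul_mulVec,
          Matrix.fromBlocks_mulVec, dotProduct_smul]
        simp only [Sum.elim_comp_inl, Sum.elim_comp_inr, sumElim_dotProduct_sumElim,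
          dotProduct_add, Matrix.neg_mulVec, Matrix.smul_mulVec, dotProduct_neg,
          dotProduct_smul, smul_eq_mul, hBt, e1]
        rw [dotProduct_comm x, dotProduct_comm y ((cmat B).mulVec x), dotProduct_comm y]
        ring
    rw [hF, sub_eq_zero.mp key, Jmat, Matrix.mul_smul, Matrix.fromBlocks_multiply]
    simp
  refine ⟨hFe, fun X => ?_⟩
  have hRe : matRe F = cmat ((1 / 2 : ℝ) • Matrix.fromBlocks 0 Q (-R) 0) := by
    rw [hFe]
    ext (i | i) (j | j) <;> simp [matRe, cmat]
  have hIm : matIm F = cmat ((1 / 2 : ℝ) • Matrix.fromBlocks (-B) 0 0 Bᵀ) := by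
    rw [hFe]
    ext (i | i) (j | j) <;> simp [matIm, cmat]
  obtain ⟨x, y, rfl⟩ : ∃ x y : Fin n → ℝ, X = Sum.elim x y :=
    ⟨X ∘ Sum.inl, X ∘ Sum.inr, by simp⟩
  rw [← forall₂_and]
  refine forall₂_congr fun j _ => ?_
  change _ ↔ (R * B ^ j).mulVec x = 0 ∧ (Q * Bᵀ ^ j).mulVec y = 0
  have hneg : (-B) ^ j = ((-1 : ℝ) ^ j) • B ^ j := by
    rw [← smul_pow]; simp
  rw [hRe, hIm, ← cmat_pow_aux, ← cmat_mul_aux, cmat_mulVec_aux, cvec_eq_zero_aux, smul_pow,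
    fromBlocks_pow_aux, Matrix.smul_mul, Matrix.mul_smul, Matrix.smul_mulVec,
    Matrix.smul_mulVec, smul_eq_zero_iff_right (by norm_num),
    smul_eq_zero_iff_right (by positivity), Matrix.fromBlocks_multiply, hneg,
    Matrix.fromBlocks_mulVec]
  have hz : ∀ a b : Fin n → ℝ, Sum.elim a b = 0 ↔ b = 0 ∧ a = 0 := fun a b => by
    simp [funext_iff, and_comm]
  rw [hz]
  simp [Matrix.smul_mulVec, Matrix.neg_mulVec]
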